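/- arXiv:2506.09618 — 2 statements merged into one kernel-verified Lean document; each statement's English description precedes it below -/
import Mathlib

section
/- Let C be an arbitrary set of corner-interval minors of M and let P be a minimal prime ideal of I(C). Then there exists an admissible set W ⊆ V(C) such that P = P_W(C). -/
open MvPolynomial

/-- A 2-minor `[a₁,a₂|b₁,b₂]` (with `a₁ < a₂`, `b₁ < b₂`) of the `m × n` matrix
of indeterminates `M = (x_{ij})`. -/
structure Minor2 (m n : ℕ) where
  a1 : Fin m
  a2 : Fin m
  b1 : Fin n
  b2 : Fin n
  ha : a1 < a2
  hb : b1 < b2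

namespace Minor2

variable {m n : ℕ}

/-- The vertex set of a 2-minor. -/
def vertexSet (δ : Minor2 m n) : Set (Fin m × Fin n) :=
  {(δ.a1, δ.b1), (δ.a1, δ.b2), (δ.a2, δ.b1), (δ.a2, δ.b2)}

/-- `{p,q}` is one of the two vertical edges of the minor `δ`. -/
def VertEdge (δ : Minor2 m n) (p q : Fin m × Fin n) : Prop :=
  ({p, q} : Set (Fin m × Fin n)) = {(δ.a1, δ.b1), (δ.a2, δ.b1)} ∨
  ({p, q} : Set (Fin m × Fin n)) = {(δ.a1, δ.b2), (δ.a2, δ.b2)}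

/-- `{p,q}` is one of the two horizontal edges of the minor `δ`. -/
def HorizEdge (δ : Minor2 m n) (p q : Fin m × Fin n) : Prop :=
  ({p, q} : Set (Fin m × Fin n)) = {(δ.a1, δ.b1), (δ.a1, δ.b2)} ∨
  ({p, q} : Set (Fin m × Fin n)) = {(δ.a2, δ.b1), (δ.a2, δ.b2)}

/-- `{p,q}` is an edge (vertical or horizontal) of the minor `δ`. -/
def IsEdge (δ : Minor2 m n) (p q : Fin m × Fin n) : Prop :=
  δ.VertEdge p q ∨ δ.HorizEdge p q

/-- The binomial `f_δ = x_{a₁b₁}x_{a₂b₂} − x_{a₁b₂}x_{a₂b₁}` of the 2-minor `δ`. -/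
noncomputable def binom (K : Type*) [Field K] (δ : Minor2 m n) : MvPolynomial (Fin m × Fin n) K :=
  X (δ.a1, δ.b1) * X (δ.a2, δ.b2) - X (δ.a1, δ.b2) * X (δ.a2, δ.b1)

end Minor2

/-- The vertex set `V(C)` of a collection `C` of 2-minors. -/
def vertexSetOf {m n : ℕ} (C : Set (Minor2 m n)) : Set (Fin m × Fin n) :=
  ⋃ δ ∈ C, δ.vertexSet

/-- The binomial ideal `I(C)` generated by the binomials of the minors in `C`. -/
noncomputable def minorIdeal (K : Type*) [Field K] {m n : ℕ} (C : Set (Minor2 m n)) :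
    Ideal (MvPolynomial (Fin m × Fin n) K) :=
  Ideal.span {f | ∃ δ ∈ C, f = Minor2.binom K δ}

/-- Two positions are joined by a vertical edge of some minor of `C`. -/
def vertAdj {m n : ℕ} (C : Set (Minor2 m n)) (p q : Fin m × Fin n) : Prop :=
  ∃ δ ∈ C, δ.VertEdge p q

/-- Two positions are joined by a horizontal edge of some minor of `C`. -/
def horizAdj {m n : ℕ} (C : Set (Minor2 m n)) (p q : Fin m × Fin n) : Prop :=
  ∃ δ ∈ C, δ.HorizEdge p q

/-- The maximal vertical interval of `C` containing a position, encoded as the class of the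
position under connectivity by vertical edges of minors of `C`. -/
def vClass {m n : ℕ} (C : Set (Minor2 m n)) (p : Fin m × Fin n) : Quot (vertAdj C) :=
  Quot.mk _ p

/-- The maximal horizontal interval of `C` containing a position. -/
def hClass {m n : ℕ} (C : Set (Minor2 m n)) (p : Fin m × Fin n) : Quot (horizAdj C) :=
  Quot.mk _ p

/-- The monomial map `φ` with `φ(x_{ab}) = h_i v_j`, where `H_i` and `V_j` are the maximal
horizontal and vertical intervals of `C` containing `x_{ab}` (variables not appearing in any
minor of `C` are sent to products of fresh variables, so that the kernel of `φ` is the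
extension to `S` of the toric ideal `J_C ⊆ S_C`). -/
noncomputable def phiC (K : Type*) [Field K] {m n : ℕ} (C : Set (Minor2 m n)) :
    MvPolynomial (Fin m × Fin n) K →ₐ[K]
      MvPolynomial (Quot (horizAdj C) ⊕ Quot (vertAdj C)) K :=
  aeval fun p => X (Sum.inl (hClass C p)) * X (Sum.inr (vClass C p))

/-- The toric ideal `J_C = ker φ`. -/
noncomputable def toricIdeal (K : Type*) [Field K] {m n : ℕ} (C : Set (Minor2 m n)) :
    Ideal (MvPolynomial (Fin m × Fin n) K) :=
  RingHom.ker (phiC K C)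

/-- A subset `W ⊆ V(C)` is admissible if for every `δ ∈ C` either `W ∩ V(δ) = ∅`
or `W` contains an edge of `δ`. -/
def Admissible {m n : ℕ} (C : Set (Minor2 m n)) (W : Set (Fin m × Fin n)) : Prop :=
  W ⊆ vertexSetOf C ∧
    ∀ δ ∈ C, W ∩ δ.vertexSet = ∅ ∨ ∃ p q, p ∈ W ∧ q ∈ W ∧ δ.IsEdge p q

/-- `C' = {δ ∈ C : V(δ) ∩ W = ∅}`. -/
def minorsAvoiding {m n : ℕ} (C : Set (Minor2 m n)) (W : Set (Fin m × Fin n)) :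
    Set (Minor2 m n) :=
  {δ ∈ C | δ.vertexSet ∩ W = ∅}

/-- The ideal generated by the variables with index in `W`. -/
noncomputable def varIdeal (K : Type*) [Field K] {m n : ℕ} (W : Set (Fin m × Fin n)) :
    Ideal (MvPolynomial (Fin m × Fin n) K) :=
  Ideal.span ((fun p => (X p : MvPolynomial (Fin m × Fin n) K)) '' W)

/-- The prime ideal `P_W(C) = (x_{ij} : x_{ij} ∈ W) + J_{C'}`,
where `C' = {δ ∈ C : V(δ) ∩ W = ∅}`. -/
noncomputable def PW (K : Type*) [Field K] {m n : ℕ} (C : Set (Minor2 m n))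
    (W : Set (Fin m × Fin n)) : Ideal (MvPolynomial (Fin m × Fin n) K) :=
  varIdeal K W + toricIdeal K (minorsAvoiding C W)

/-- A cycle `σ : h_{i₁}, v_{j₁}, h_{i₂}, v_{j₂}, …, h_{i_r}, v_{j_r}` (`r ≥ 2`) of the
bipartite graph `G(C)`, recorded by the intersection vertices
`p k = H_{i_k} ∩ V_{j_k}` and `q k = H_{i_{k+1}} ∩ V_{j_k}` (indices cyclic, `r = len + 2`). -/
structure CycleIn {m n : ℕ} (C : Set (Minor2 m n)) where
  len : ℕ
  p : Fin (len + 2) → Fin m × Fin n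
  q : Fin (len + 2) → Fin m × Fin n
  p_mem : ∀ k, p k ∈ vertexSetOf C
  q_mem : ∀ k, q k ∈ vertexSetOf C
  shareV : ∀ k, vClass C (p k) = vClass C (q k)
  shareH : ∀ k, hClass C (q k) = hClass C (p (k + 1))
  injH : Function.Injective fun k => hClass C (p k)
  injV : Function.Injective fun k => vClass C (p k)

/-- The binomial `f_σ` associated to a cycle `σ` of `G(C)`. -/
noncomputable def cycleBinom (K : Type*) [Field K] {m n : ℕ} {C : Set (Minor2 m n)}
    (σ : CycleIn C) : MvPolynomial (Fin m × Fin n) K :=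
  (∏ k, X (σ.p k)) - (∏ k, X (σ.q k))

/-- The substitution that sets the variables indexed by `W` to zero. -/
noncomputable def killW (K : Type*) [Field K] {m n : ℕ} (W : Set (Fin m × Fin n)) :
    MvPolynomial (Fin m × Fin n) K →ₐ[K] MvPolynomial (Fin m × Fin n) K :=
  open Classical in aeval fun p => if p ∈ W then 0 else X p

lemma killW_mem (K : Type*) [Field K] {m n : ℕ} {W : Set (Fin m × Fin n)} {p} (h : p ∈ W) :
    killW K W (X p) = 0 := by
  simp [killW, h]

lemma killW_not_mem (K : Type*) [Field K] {m n : ℕ} {W : Set (Fin m × Fin n)} {p} (h : p ∉ W) :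
    killW K W (X p) = X p := by
  simp [killW, h]

lemma sub_killW (K : Type*) [Field K] {m n : ℕ} (W : Set (Fin m × Fin n))
    (f : MvPolynomial (Fin m × Fin n) K) : f - killW K W f ∈ varIdeal K W := by
  have key : (Ideal.Quotient.mkₐ K (varIdeal K W)).comp (killW K W)
      = Ideal.Quotient.mkₐ K (varIdeal K W) := by
    apply MvPolynomial.algHom_ext
    intro p
    by_cases h : p ∈ W
    · have : (X p : MvPolynomial (Fin m × Fin n) K) ∈ varIdeal K W :=
        Ideal.subset_span ⟨p, h, rfl⟩
      rw [AlgHom.comp_apply, killW_mem K h, map_zero]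
      exact (Ideal.Quotient.eq_zero_iff_mem.2 this).symm
    · rw [AlgHom.comp_apply, killW_not_mem K h]
  rw [← Ideal.Quotient.eq]
  exact (DFunLike.congr_fun key f).symm

lemma ker_le_PW (K : Type*) [Field K] {m n : ℕ} (C : Set (Minor2 m n))
    (W : Set (Fin m × Fin n)) :
    RingHom.ker ((phiC K (minorsAvoiding C W)).comp (killW K W)) ≤ PW K C W := by
  intro f hf
  have h1 := sub_killW K W f
  have h2 : killW K W f ∈ toricIdeal K (minorsAvoiding C W) := hf
  have := Submodule.add_mem_sup h1 h2
  rw [sub_add_cancel] at this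
  exact this

lemma phi_binom (K : Type*) [Field K] {m n : ℕ} (C : Set (Minor2 m n)) (δ : Minor2 m n)
    (h : δ ∈ C) : phiC K C (δ.binom K) = 0 := by
  have h1 : hClass C (δ.a1, δ.b1) = hClass C (δ.a1, δ.b2) :=
    Quot.sound ⟨δ, h, Or.inl rfl⟩
  have h2 : hClass C (δ.a2, δ.b1) = hClass C (δ.a2, δ.b2) :=
    Quot.sound ⟨δ, h, Or.inr rfl⟩
  have h3 : vClass C (δ.a1, δ.b1) = vClass C (δ.a2, δ.b1) :=
    Quot.sound ⟨δ, h, Or.inl rfl⟩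
  have h4 : vClass C (δ.a1, δ.b2) = vClass C (δ.a2, δ.b2) :=
    Quot.sound ⟨δ, h, Or.inr rfl⟩
  simp only [Minor2.binom, phiC, map_sub, map_mul, aeval_X, h1, h2, h3, h4]
  ring

lemma minorIdeal_le_ker (K : Type*) [Field K] {m n : ℕ} (C : Set (Minor2 m n))
    (W : Set (Fin m × Fin n)) (hW : Admissible C W) :
    minorIdeal K C ≤ RingHom.ker ((phiC K (minorsAvoiding C W)).comp (killW K W)) := by
  refine Ideal.span_le.2 ?_
  rintro _ ⟨δ, hδ, rfl⟩
  change (phiC K (minorsAvoiding C W)) (killW K W (δ.binom K)) = 0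
  rcases hW.2 δ hδ with h | ⟨p, q, hp, hq, he⟩
  · have hn : ∀ p ∈ δ.vertexSet, p ∉ W := fun p hp hw => by
      have : p ∈ W ∩ δ.vertexSet := ⟨hw, hp⟩
      rw [h] at this
      exact this
    have : killW K W (δ.binom K) = δ.binom K := by
      simp only [Minor2.binom, map_sub, map_mul]
      rw [killW_not_mem, killW_not_mem, killW_not_mem, killW_not_mem] <;>
        exact hn _ (by simp [Minor2.vertexSet])
    rw [this]
    exact phi_binom K _ δ ⟨hδ, by rw [Set.inter_comm]; exact h⟩
  · have h0 : killW K W (δ.binom K) = 0 := by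
      simp only [Minor2.binom, map_sub, map_mul]
      rcases he with (he | he) | (he | he) <;>
      · rw [Set.pair_eq_pair_iff] at he
        rcases he with ⟨rfl, rfl⟩ | ⟨rfl, rfl⟩ <;>
        simp [killW_mem K hp, killW_mem K hq]
    rw [h0, map_zero]

lemma mem_vertexSetOf {m n : ℕ} {C : Set (Minor2 m n)} {δ : Minor2 m n} (h : δ ∈ C) {p}
    (hp : p ∈ δ.vertexSet) : p ∈ vertexSetOf C :=
  Set.mem_biUnion h hp

/-- A point with values in a field, killing the binomials and nonzero on the vertices,
factors through the toric parametrization. -/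
lemma factor (K L : Type*) [Field K] [Field L] [Algebra K L] {m n : ℕ} [NeZero n]
    (C : Set (Minor2 m n)) (hC : ∀ δ ∈ C, δ.b1 = 0)
    (g : MvPolynomial (Fin m × Fin n) K →ₐ[K] L)
    (hg : ∀ δ ∈ C, g (δ.binom K) = 0)
    (hne : ∀ p ∈ vertexSetOf C, g (X p) ≠ 0) :
    ∀ f ∈ toricIdeal K C, g f = 0 := by
  classical
  let x : Fin m × Fin n → L := fun p => g (X p)
  let H0 : Fin m × Fin n → L := fun p => if p ∈ vertexSetOf C then x (p.1, 0) else x p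
  let V0 : Fin m × Fin n → L := fun p => if p ∈ vertexSetOf C then x p / x (p.1, 0) else 1
  have hH : ∀ p q, horizAdj C p q → H0 p = H0 q := by
    rintro p q ⟨δ, hδ, he⟩
    have m11 := mem_vertexSetOf hδ (p := (δ.a1, δ.b1)) (by simp [Minor2.vertexSet])
    have m12 := mem_vertexSetOf hδ (p := (δ.a1, δ.b2)) (by simp [Minor2.vertexSet])
    have m21 := mem_vertexSetOf hδ (p := (δ.a2, δ.b1)) (by simp [Minor2.vertexSet])
    have m22 := mem_vertexSetOf hδ (p := (δ.a2, δ.b2)) (by simp [Minor2.vertexSet])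
    rcases he with he | he <;>
    · rw [Set.pair_eq_pair_iff] at he
      rcases he with ⟨rfl, rfl⟩ | ⟨rfl, rfl⟩ <;> simp [H0, m11, m12, m21, m22]
  have hV : ∀ p q, vertAdj C p q → V0 p = V0 q := by
    rintro p q ⟨δ, hδ, he⟩
    have m11 := mem_vertexSetOf hδ (p := (δ.a1, δ.b1)) (by simp [Minor2.vertexSet])
    have m12 := mem_vertexSetOf hδ (p := (δ.a1, δ.b2)) (by simp [Minor2.vertexSet])
    have m21 := mem_vertexSetOf hδ (p := (δ.a2, δ.b1)) (by simp [Minor2.vertexSet])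
    have m22 := mem_vertexSetOf hδ (p := (δ.a2, δ.b2)) (by simp [Minor2.vertexSet])
    have hb := hg δ hδ
    simp only [Minor2.binom, map_sub, map_mul] at hb
    unfold Minor2.VertEdge at he
    rw [hC δ hδ] at m11 m21 he hb
    have n1 : x (δ.a1, 0) ≠ 0 := hne _ m11
    have n2 : x (δ.a2, 0) ≠ 0 := hne _ m21
    have e1 : V0 (δ.a1, 0) = V0 (δ.a2, 0) := by
      simp [V0, m11, m21, n1, n2]
    have e2 : V0 (δ.a1, δ.b2) = V0 (δ.a2, δ.b2) := by
      simp only [V0, m12, m22, if_true]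
      rw [div_eq_div_iff n1 n2]
      change x _ * x _ - x _ * x _ = 0 at hb
      linear_combination -hb
    rcases he with he | he <;>
    · rw [Set.pair_eq_pair_iff] at he
      rcases he with ⟨rfl, rfl⟩ | ⟨rfl, rfl⟩ <;> simp [e1, e2]
  let θ : MvPolynomial (Quot (horizAdj C) ⊕ Quot (vertAdj C)) K →ₐ[K] L :=
    aeval (Sum.elim (Quot.lift H0 hH) (Quot.lift V0 hV))
  have hrow : ∀ p ∈ vertexSetOf C, x (p.1, 0) ≠ 0 := by
    intro p hp
    obtain ⟨δ, hδ, hp⟩ := Set.mem_iUnion₂.1 hp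
    have m11 := mem_vertexSetOf hδ (p := (δ.a1, δ.b1)) (by simp [Minor2.vertexSet])
    have m21 := mem_vertexSetOf hδ (p := (δ.a2, δ.b1)) (by simp [Minor2.vertexSet])
    rw [hC δ hδ] at m11 m21
    rcases hp with rfl | rfl | rfl | rfl
    exacts [hne _ m11, hne _ m11, hne _ m21, hne _ m21]
  have hθ : θ.comp (phiC K C) = g := by
    apply MvPolynomial.algHom_ext
    intro p
    have : H0 p * V0 p = x p := by
      by_cases h : p ∈ vertexSetOf C
      · simp only [H0, V0, h, if_true]
        exact mul_div_cancel₀ _ (hrow p h)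
      · simp [H0, V0, h]
    simpa [θ, phiC, hClass, vClass] using this
  intro f hf
  have hf : phiC K C f = 0 := hf
  rw [← hθ, AlgHom.comp_apply, hf, map_zero]

theorem statement5 (K : Type*) [Field K] (m n : ℕ) [NeZero n]
    (C : Set (Minor2 m n)) (hC : ∀ δ ∈ C, δ.b1 = 0)
    (P : Ideal (MvPolynomial (Fin m × Fin n) K))
    (hP : P ∈ (minorIdeal K C).minimalPrimes) :
    ∃ W : Set (Fin m × Fin n), Admissible C W ∧ P = PW K C W := by
  obtain ⟨⟨hPp, hPI⟩, hmin⟩ := hP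
  have hb : ∀ δ ∈ C, δ.binom K ∈ P := fun δ hδ => hPI (Ideal.subset_span ⟨δ, hδ, rfl⟩)
  let W : Set (Fin m × Fin n) := {p | p ∈ vertexSetOf C ∧ X p ∈ P}
  have hW : Admissible C W := by
    refine ⟨fun p hp => hp.1, fun δ hδ => ?_⟩
    rw [or_iff_not_imp_left]
    intro hne
    obtain ⟨r, hr, hrδ⟩ := Set.nonempty_iff_ne_empty.2 hne
    have m11 := mem_vertexSetOf hδ (p := (δ.a1, δ.b1)) (by simp [Minor2.vertexSet])
    have m12 := mem_vertexSetOf hδ (p := (δ.a1, δ.b2)) (by simp [Minor2.vertexSet])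
    have m21 := mem_vertexSetOf hδ (p := (δ.a2, δ.b1)) (by simp [Minor2.vertexSet])
    have m22 := mem_vertexSetOf hδ (p := (δ.a2, δ.b2)) (by simp [Minor2.vertexSet])
    have hd := hb δ hδ
    unfold Minor2.binom at hd
    have hr := hr.2
    have d1 : (X (δ.a1, δ.b1) * X (δ.a2, δ.b2) ∈ P) → 
        X (δ.a1, δ.b2) ∈ P ∨ X (δ.a2, δ.b1) ∈ P := fun h =>
      hPp.mem_or_mem ((Submodule.sub_mem_iff_right P h).1 hd)
    have d2 : (X (δ.a1, δ.b2) * X (δ.a2, δ.b1) ∈ P) → 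
        X (δ.a1, δ.b1) ∈ P ∨ X (δ.a2, δ.b2) ∈ P := fun h =>
      hPp.mem_or_mem ((Submodule.sub_mem_iff_left P h).1 hd)
    have E1 : X (δ.a1, δ.b1) ∈ P → X (δ.a2, δ.b1) ∈ P →
        ∃ p q, p ∈ W ∧ q ∈ W ∧ δ.IsEdge p q := fun h h' =>
      ⟨_, _, ⟨m11, h⟩, ⟨m21, h'⟩, Or.inl (Or.inl rfl)⟩
    have E2 : X (δ.a1, δ.b2) ∈ P → X (δ.a2, δ.b2) ∈ P →
        ∃ p q, p ∈ W ∧ q ∈ W ∧ δ.IsEdge p q := fun h h' =>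
      ⟨_, _, ⟨m12, h⟩, ⟨m22, h'⟩, Or.inl (Or.inr rfl)⟩
    have E3 : X (δ.a1, δ.b1) ∈ P → X (δ.a1, δ.b2) ∈ P →
        ∃ p q, p ∈ W ∧ q ∈ W ∧ δ.IsEdge p q := fun h h' =>
      ⟨_, _, ⟨m11, h⟩, ⟨m12, h'⟩, Or.inr (Or.inl rfl)⟩
    have E4 : X (δ.a2, δ.b1) ∈ P → X (δ.a2, δ.b2) ∈ P →
        ∃ p q, p ∈ W ∧ q ∈ W ∧ δ.IsEdge p q := fun h h' =>
      ⟨_, _, ⟨m21, h⟩, ⟨m22, h'⟩, Or.inr (Or.inr rfl)⟩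
    rcases hrδ with rfl | rfl | rfl | rfl
    · rcases d1 (P.mul_mem_right _ hr) with h | h
      exacts [E3 hr h, E1 hr h]
    · rcases d2 (P.mul_mem_right _ hr) with h | h
      exacts [E3 h hr, E2 hr h]
    · rcases d2 (P.mul_mem_left _ hr) with h | h
      exacts [E1 h hr, E4 hr h]
    · rcases d1 (P.mul_mem_left _ hr) with h | h
      exacts [E2 h hr, E4 h hr]
  have hPW : PW K C W ≤ P := by
    refine sup_le ?_ ?_
    · refine Ideal.span_le.2 ?_
      rintro _ ⟨p, hp, rfl⟩
      exact hp.2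
    · let L := FractionRing (MvPolynomial (Fin m × Fin n) K ⧸ P)
      let g : MvPolynomial (Fin m × Fin n) K →ₐ[K] L :=
        (IsScalarTower.toAlgHom K (MvPolynomial (Fin m × Fin n) K ⧸ P) L).comp
          (Ideal.Quotient.mkₐ K P)
      have hg : ∀ f, g f = 0 ↔ f ∈ P := by
        intro f
        rw [← Ideal.Quotient.eq_zero_iff_mem]
        exact map_eq_zero_iff _ (IsFractionRing.injective (MvPolynomial (Fin m × Fin n) K ⧸ P) L)
      intro f hf
      rw [← hg]
      refine factor K L (minorsAvoiding C W) (fun δ hδ => hC δ hδ.1) g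
        (fun δ hδ => (hg _).2 (hb δ hδ.1)) ?_ f hf
      intro p hp h0
      obtain ⟨δ, hδ, hp⟩ := Set.mem_iUnion₂.1 hp
      have : p ∈ δ.vertexSet ∩ W := ⟨hp, mem_vertexSetOf hδ.1 hp, (hg _).1 h0⟩
      rw [hδ.2] at this
      exact this
  have h1 := ker_le_PW K C W
  have h2 := hmin ⟨RingHom.ker_isPrime _, minorIdeal_le_ker K C W hW⟩ (h1.trans hPW)
  exact ⟨W, hW, le_antisymm (h2.trans h1) hPW⟩
end

section
/- Let C be an arbitrary set of corner minors of M, and let σ be a cycle in the associated bipartite graph G(C). Let H₁ and V₁ denote the maximal horizontal and vertical intervals of C containing the vertex x₁₁, with corresponding vertices h₁ and v₁ of G(C). Then x₁₁ f_σ ∈ I(C) if and only if σ passes through v₁ or σ passes through h₁. -/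
open MvPolynomial

theorem vertAdj_snd {m n : ℕ} {C : Set (Minor2 m n)} {p q : Fin m × Fin n}
    (h : vertAdj C p q) : p.2 = q.2 := by
  obtain ⟨δ, _, h | h⟩ := h
  all_goals
    have hp := h.subset (show p ∈ _ by simp)
    have hq := h.subset (show q ∈ _ by simp)
    simp only [Set.mem_insert_iff, Set.mem_singleton_iff] at hp hq
    rcases hp with rfl | rfl <;> rcases hq with rfl | rfl <;> rfl

theorem horizAdj_fst {m n : ℕ} {C : Set (Minor2 m n)} {p q : Fin m × Fin n}
    (h : horizAdj C p q) : p.1 = q.1 := by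
  obtain ⟨δ, _, h | h⟩ := h
  all_goals
    have hp := h.subset (show p ∈ _ by simp)
    have hq := h.subset (show q ∈ _ by simp)
    simp only [Set.mem_insert_iff, Set.mem_singleton_iff] at hp hq
    rcases hp with rfl | rfl <;> rcases hq with rfl | rfl <;> rfl

theorem snd_eq_of_vClass {m n : ℕ} {C : Set (Minor2 m n)} {p q : Fin m × Fin n}
    (h : vClass C p = vClass C q) : p.2 = q.2 :=
  congrArg (Quot.lift (fun p : Fin m × Fin n => p.2) fun _ _ h => vertAdj_snd h) h

theorem fst_eq_of_hClass {m n : ℕ} {C : Set (Minor2 m n)} {p q : Fin m × Fin n}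
    (h : hClass C p = hClass C q) : p.1 = q.1 :=
  congrArg (Quot.lift (fun p : Fin m × Fin n => p.1) fun _ _ h => horizAdj_fst h) h

theorem vClass_eq {m n : ℕ} [NeZero m] [NeZero n] {C : Set (Minor2 m n)}
    (hC : ∀ δ ∈ C, δ.a1 = 0 ∧ δ.b1 = 0) {p : Fin m × Fin n} (hp : p ∈ vertexSetOf C) :
    vClass C p = vClass C (0, p.2) := by
  simp only [vertexSetOf, Set.mem_iUnion] at hp
  obtain ⟨δ, hδ, hp⟩ := hp
  obtain ⟨h1, h2⟩ := hC δ hδ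
  simp only [Minor2.vertexSet, Set.mem_insert_iff, Set.mem_singleton_iff] at hp
  rcases hp with rfl | rfl | rfl | rfl
  · rw [h1]
  · rw [h1]
  · symm; exact Quot.sound ⟨δ, hδ, Or.inl (by rw [h1])⟩
  · symm; exact Quot.sound ⟨δ, hδ, Or.inr (by rw [h1])⟩

theorem hClass_eq {m n : ℕ} [NeZero m] [NeZero n] {C : Set (Minor2 m n)}
    (hC : ∀ δ ∈ C, δ.a1 = 0 ∧ δ.b1 = 0) {p : Fin m × Fin n} (hp : p ∈ vertexSetOf C) :
    hClass C p = hClass C (p.1, 0) := by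
  simp only [vertexSetOf, Set.mem_iUnion] at hp
  obtain ⟨δ, hδ, hp⟩ := hp
  obtain ⟨h1, h2⟩ := hC δ hδ
  simp only [Minor2.vertexSet, Set.mem_insert_iff, Set.mem_singleton_iff] at hp
  rcases hp with rfl | rfl | rfl | rfl
  · rw [h2]
  · symm; exact Quot.sound ⟨δ, hδ, Or.inl (by rw [h2])⟩
  · rw [h2]
  · symm; exact Quot.sound ⟨δ, hδ, Or.inr (by rw [h2])⟩

/-- In the quotient ring, `x₀₀ x_p = x_{0b} x_{a0}` for each vertex `p = (a,b)`. -/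
theorem corner_rel (K : Type*) [Field K] {m n : ℕ} [NeZero m] [NeZero n] {C : Set (Minor2 m n)}
    (hC : ∀ δ ∈ C, δ.a1 = 0 ∧ δ.b1 = 0) (a : Fin m) (b : Fin n) (hp : (a, b) ∈ vertexSetOf C) :
    Ideal.Quotient.mk (minorIdeal K C) (X (0, 0)) * Ideal.Quotient.mk (minorIdeal K C) (X (a, b)) =
    Ideal.Quotient.mk (minorIdeal K C) (X (0, b)) *
      Ideal.Quotient.mk (minorIdeal K C) (X (a, 0)) := by
  simp only [vertexSetOf, Set.mem_iUnion] at hp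
  obtain ⟨δ, hδ, hp⟩ := hp
  obtain ⟨h1, h2⟩ := hC δ hδ
  simp only [Minor2.vertexSet, Set.mem_insert_iff, Set.mem_singleton_iff, Prod.mk.injEq] at hp
  rcases hp with ⟨rfl, rfl⟩ | ⟨rfl, rfl⟩ | ⟨rfl, rfl⟩ | ⟨rfl, rfl⟩
  · rw [h1, h2]
  · rw [h1, mul_comm]
  · rw [h2]
  · rw [← map_mul, ← map_mul, Ideal.Quotient.eq]
    apply Ideal.subset_span
    exact ⟨δ, hδ, by rw [Minor2.binom, h1, h2]⟩

theorem telescope {R : Type*} [CommRing R] (z : R) (P Q c : ℕ → R)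
    (h : ∀ i, z * c (i + 1) * P i = z * c i * Q i) (j : ℕ) :
    z * (c j * ∏ i ∈ Finset.range j, P i) = z * (c 0 * ∏ i ∈ Finset.range j, Q i) := by
  induction j with
  | zero => simp
  | succ j ih =>
    rw [Finset.prod_range_succ, Finset.prod_range_succ]
    linear_combination (∏ i ∈ Finset.range j, P i) * h j + Q j * ih

theorem prod_rotate {R : Type*} [CommRing R] (r : ℕ) (f : Fin (r + 2) → R) (s : Fin (r + 2)) :
    ∏ k, f k = ∏ i ∈ Finset.range (r + 2), f (s + Fin.ofNat (r + 2) i) := by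
  rw [Finset.prod_range, ← Equiv.prod_comp (Equiv.addLeft s)]
  simp

theorem ofNat_step (r i : ℕ) : Fin.ofNat (r + 2) (i + 1) = Fin.ofNat (r + 2) i + 1 := by
  ext; simp [Fin.add_def]

theorem ofNat_last (r : ℕ) : Fin.ofNat (r + 2) (r + 1) + 1 = 0 := by
  ext; simp [Fin.add_def]

/-- The set of exponents equivalent to that of `x₀₀ · x^U`. -/
def fiberSet {m n : ℕ} [NeZero m] [NeZero n] (U : (Fin m × Fin n) →₀ ℕ) :
    Set ((Fin m × Fin n) →₀ ℕ) :=
  {s | s = Finsupp.single (0, 0) 1 + U ∨ ∃ a b t, a ≠ 0 ∧ b ≠ 0 ∧ U = t + Finsupp.single (a, b) 1 ∧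
    s = t + Finsupp.single (a, 0) 1 + Finsupp.single (0, b) 1}

theorem fiberSet_iff {m n : ℕ} [NeZero m] [NeZero n] (U : (Fin m × Fin n) →₀ ℕ)
    (hr : ∀ a, U (a, 0) = 0) (hc : ∀ b, U (0, b) = 0) (t : (Fin m × Fin n) →₀ ℕ)
    (a : Fin m) (b : Fin n) (ha : a ≠ 0) (hb : b ≠ 0) :
    t + Finsupp.single (0, 0) 1 + Finsupp.single (a, b) 1 ∈ fiberSet U ↔
    t + Finsupp.single (a, 0) 1 + Finsupp.single (0, b) 1 ∈ fiberSet U := by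
  constructor
  · rintro (h | ⟨a', b', t', ha', hb', hU, h⟩)
    · refine Or.inr ⟨a, b, t, ha, hb, ?_, rfl⟩
      apply add_left_cancel (a := Finsupp.single ((0 : Fin m), (0 : Fin n)) 1)
      rw [← h]; abel
    · exfalso
      have h0 := hr 0
      have h1 := DFunLike.congr_fun h (0, 0)
      rw [hU] at h0
      simp [ha', hb', ha, hb] at h0 h1
      omega
  · rintro (h | ⟨a', b', t', ha', hb', hU, h⟩)
    · exfalso
      have h1 := DFunLike.congr_fun h (a, 0)
      have h0 := hr a
      simp [Finsupp.single_apply, ha, ha.symm, hb] at h0 h1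
      omega
    · have h0 := hr a
      have h0' := hc b
      have h1 := DFunLike.congr_fun h (a, 0)
      have h2 := DFunLike.congr_fun h (0, b)
      rw [hU] at h0 h0'
      simp [Finsupp.single_apply, ha, hb, ha', hb', ha.symm, hb.symm] at h0 h1 h0' h2
      have e1 : a' = a := by by_contra hne; rw [if_neg hne] at h1; omega
      have e2 : b' = b := by by_contra hne; rw [if_neg hne] at h2; omega
      subst e1 e2
      have := add_right_cancel (add_right_cancel h)
      subst this
      exact Or.inl (by rw [hU]; abel)

open Classical in
/-- Sum of the coefficients over a set of exponents. -/
noncomputable def sumOver (K : Type*) [Field K] {τ : Type*} (A : Set (τ →₀ ℕ)) :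
    MvPolynomial τ K →ₗ[K] K :=
  (MvPolynomial.basisMonomials τ K).constr K fun s => if s ∈ A then 1 else 0

open Classical in
theorem sumOver_monomial (K : Type*) [Field K] {τ : Type*} (A : Set (τ →₀ ℕ)) (s : τ →₀ ℕ) :
    sumOver K A (monomial s 1) = if s ∈ A then 1 else 0 := by
  have := (MvPolynomial.basisMonomials τ K).constr_basis K
    (fun s => if s ∈ A then (1 : K) else 0) s
  rwa [MvPolynomial.coe_basisMonomials] at this

theorem sumOver_ideal (K : Type*) [Field K] {m n : ℕ} [NeZero m] [NeZero n] {C : Set (Minor2 m n)}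
    (hC : ∀ δ ∈ C, δ.a1 = 0 ∧ δ.b1 = 0) (U : (Fin m × Fin n) →₀ ℕ)
    (hr : ∀ a, U (a, 0) = 0) (hc : ∀ b, U (0, b) = 0) (f : MvPolynomial (Fin m × Fin n) K)
    (hf : f ∈ minorIdeal K C) : ∀ g, sumOver K (fiberSet U) (g * f) = 0 := by
  induction hf using Submodule.span_induction with
  | zero => simp
  | add x y _ _ hx hy => intro g; rw [mul_add, map_add, hx, hy, add_zero]
  | smul h x _ hx => intro g; rw [smul_eq_mul, ← mul_assoc, hx]
  | mem x hx =>
    intro g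
    obtain ⟨δ, hδ, rfl⟩ := hx
    obtain ⟨h1, h2⟩ := hC δ hδ
    have ha : δ.a2 ≠ 0 := by have := δ.ha; rw [h1] at this; exact this.ne'
    have hb : δ.b2 ≠ 0 := by have := δ.hb; rw [h2] at this; exact this.ne'
    rw [g.as_sum, Finset.sum_mul, map_sum]
    apply Finset.sum_eq_zero
    intro t _
    have e : monomial t (coeff t g) * δ.binom K = coeff t g •
        (monomial (t + Finsupp.single (0, 0) 1 + Finsupp.single (δ.a2, δ.b2) 1) (1 : K) -
         monomial (t + Finsupp.single (δ.a2, 0) 1 + Finsupp.single (0, δ.b2) 1) (1 : K)) := by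
      rw [Minor2.binom, h1, h2, smul_sub, smul_monomial, smul_monomial, mul_sub]
      simp only [X, monomial_mul, mul_one, smul_eq_mul]
      congr 2
      · rw [add_assoc]
      · rw [add_assoc, add_comm (Finsupp.single (0, δ.b2) 1)]
    rw [e, map_smul, map_sub, sumOver_monomial, sumOver_monomial]
    have hiff := fiberSet_iff U hr hc t _ _ ha hb
    by_cases hm : t + Finsupp.single (0, 0) 1 + Finsupp.single (δ.a2, δ.b2) 1 ∈ fiberSet U
    · rw [if_pos hm, if_pos (hiff.mp hm), sub_self, smul_zero]
    · rw [if_neg hm, if_neg (fun h => hm (hiff.mpr h)), sub_self, smul_zero]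

theorem prod_X_eq (K : Type*) [Field K] {τ ι : Type*} [Fintype ι] (p : ι → τ) :
    ∏ k, (X (p k) : MvPolynomial τ K) = monomial (∑ k, Finsupp.single (p k) 1) 1 := by
  rw [monomial_sum_one]; rfl

theorem statement10 (K : Type*) [Field K] (m n : ℕ) [NeZero m] [NeZero n]
    (C : Set (Minor2 m n)) (hC : ∀ δ ∈ C, δ.a1 = 0 ∧ δ.b1 = 0)
    (σ : CycleIn C) :
    X ((0 : Fin m), (0 : Fin n)) * cycleBinom K σ ∈ minorIdeal K C ↔
      (∃ k, vClass C (σ.p k) = vClass C ((0 : Fin m), (0 : Fin n))) ∨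
      (∃ k, hClass C (σ.p k) = hClass C ((0 : Fin m), (0 : Fin n))) := by
  constructor
  · intro h
    by_contra hcon
    push Not at hcon
    obtain ⟨hv, hh⟩ := hcon
    have hv' : ∀ k, (σ.p k).2 ≠ 0 := fun k e => hv k (by rw [vClass_eq hC (σ.p_mem k), e])
    have hh' : ∀ k, (σ.p k).1 ≠ 0 := fun k e => hh k (by rw [hClass_eq hC (σ.p_mem k), e])
    have hne : ∀ k, σ.q k ≠ σ.p 0 := by
      intro k e
      have e1 : k = 0 := σ.injV (by simpa [e] using σ.shareV k)
      have e2 : k + 1 = 0 := σ.injH (by simpa [e] using (σ.shareH k).symm)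
      rw [e1, zero_add] at e2
      exact one_ne_zero e2
    set U : (Fin m × Fin n) →₀ ℕ := ∑ k, Finsupp.single (σ.p k) 1 with hU
    set W : (Fin m × Fin n) →₀ ℕ := ∑ k, Finsupp.single (σ.q k) 1 with hW
    have hr : ∀ a, U (a, 0) = 0 := by
      intro a
      rw [hU, Finsupp.finsetSum_apply]
      exact Finset.sum_eq_zero fun k _ =>
        Finsupp.single_eq_of_ne' fun e => hv' k (by rw [e])
    have hc : ∀ b, U (0, b) = 0 := by
      intro b
      rw [hU, Finsupp.finsetSum_apply]
      exact Finset.sum_eq_zero fun k _ =>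
        Finsupp.single_eq_of_ne' fun e => hh' k (by rw [e])
    have hUW : W ≠ U := by
      intro e
      have e0 := DFunLike.congr_fun e (σ.p 0)
      rw [hU, hW, Finsupp.finsetSum_apply, Finsupp.finsetSum_apply,
        Finset.sum_eq_zero fun k _ => Finsupp.single_eq_of_ne' (hne k)] at e0
      have := (Finset.sum_eq_zero_iff.mp e0.symm) 0 (Finset.mem_univ _)
      simp at this
    have key := sumOver_ideal K hC U hr hc _ h 1
    rw [one_mul, cycleBinom, prod_X_eq, prod_X_eq, ← hU, ← hW, X, mul_sub, monomial_mul,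
      monomial_mul, mul_one, map_sub, sumOver_monomial, sumOver_monomial,
      if_pos (show Finsupp.single (0, 0) 1 + U ∈ fiberSet U from Or.inl rfl),
      if_neg, sub_zero] at key
    · exact one_ne_zero key
    · rintro (e | ⟨a, b, t, ha, hb, hUt, e⟩)
      · exact hUW (add_left_cancel e)
      · have h0 := hr 0
        have h1 := DFunLike.congr_fun e (0, 0)
        rw [hUt] at h0
        simp [ha, hb] at h0 h1
        omega
  · have hcol : ∀ k, (σ.p k).2 = (σ.q k).2 := fun k => snd_eq_of_vClass (σ.shareV k)
    have hrow : ∀ k, (σ.q k).1 = (σ.p (k + 1)).1 := fun k => fst_eq_of_hClass (σ.shareH k)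
    let y : Fin m × Fin n → MvPolynomial (Fin m × Fin n) K ⧸ minorIdeal K C :=
      fun p => Ideal.Quotient.mk (minorIdeal K C) (X p)
    have hrel : ∀ a b, (a, b) ∈ vertexSetOf C → y (0, 0) * y (a, b) = y (0, b) * y (a, 0) :=
      corner_rel K hC
    have hrelp : ∀ k, y (0, 0) * y (σ.p k) = y (0, (σ.p k).2) * y ((σ.p k).1, 0) :=
      fun k => hrel _ _ (σ.p_mem k)
    have hrelq : ∀ k, y (0, 0) * y (σ.q k) = y (0, (σ.p k).2) * y ((σ.p (k + 1)).1, 0) := by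
      intro k
      rw [hcol, ← hrow]
      exact hrel _ _ (σ.q_mem k)
    intro h
    suffices hs : y (0, 0) * ∏ k, y (σ.p k) = y (0, 0) * ∏ k, y (σ.q k) by
      rw [cycleBinom, mul_sub, ← Ideal.Quotient.eq]
      simpa [y, map_mul, map_prod] using hs
    rcases h with ⟨k, hk⟩ | ⟨k, hk⟩
    · have hk0 : (σ.p k).2 = 0 := snd_eq_of_vClass hk
      have hs1 : k + 1 + Fin.ofNat (σ.len + 2) (σ.len + 1) = k := by
        rw [add_assoc, add_comm 1, ofNat_last, add_zero]
      have tel := telescope (y (0, 0)) (fun i => y (σ.p (k + 1 + Fin.ofNat (σ.len + 2) i)))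
        (fun i => y (σ.q (k + 1 + Fin.ofNat (σ.len + 2) i)))
        (fun i => y ((σ.p (k + 1 + Fin.ofNat (σ.len + 2) i)).1, 0)) (by
          intro i
          have h1 := hrelp (k + 1 + Fin.ofNat (σ.len + 2) i)
          have h2 := hrelq (k + 1 + Fin.ofNat (σ.len + 2) i)
          simp only [ofNat_step, ← add_assoc]
          linear_combination
            y ((σ.p (k + 1 + Fin.ofNat (σ.len + 2) i + 1)).1, 0) * h1 -
            y ((σ.p (k + 1 + Fin.ofNat (σ.len + 2) i)).1, 0) * h2) (σ.len + 1)
      have hpk : y (σ.p k) = y ((σ.p k).1, 0) := by rw [← hk0]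
      have hqk : y (σ.q k) = y ((σ.p (k + 1)).1, 0) := by rw [← hk0, hcol, ← hrow]
      have hz : k + 1 + Fin.ofNat (σ.len + 2) 0 = k + 1 := by simp
      rw [prod_rotate _ _ (k + 1), prod_rotate _ (fun k => y (σ.q k)) (k + 1),
        Finset.prod_range_succ _ (σ.len + 1), Finset.prod_range_succ _ (σ.len + 1), hs1, hpk, hqk]
      simp only [hs1, hz] at tel
      rw [mul_comm (∏ i ∈ _, _), tel, mul_comm (∏ i ∈ _, _)]
    · have hk0 : (σ.p k).1 = 0 := fst_eq_of_hClass hk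
      have hs1 : k + Fin.ofNat (σ.len + 2) (σ.len + 1) + 1 = k := by
        rw [add_assoc, ofNat_last, add_zero]
      have tel := telescope (y (0, 0)) (fun i => y (σ.q (k + Fin.ofNat (σ.len + 2) i)))
        (fun i => y (σ.p (k + Fin.ofNat (σ.len + 2) (i + 1))))
        (fun i => y (0, (σ.p (k + Fin.ofNat (σ.len + 2) i)).2)) (by
          intro i
          have h1 := hrelp (k + Fin.ofNat (σ.len + 2) i + 1)
          have h2 := hrelq (k + Fin.ofNat (σ.len + 2) i)
          simp only [ofNat_step, ← add_assoc]
          linear_combination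
            y (0, (σ.p (k + Fin.ofNat (σ.len + 2) i + 1)).2) * h2 -
            y (0, (σ.p (k + Fin.ofNat (σ.len + 2) i)).2) * h1) (σ.len + 1)
      have hpk : y (σ.p k) = y (0, (σ.p k).2) := by rw [← hk0]
      have hqk : y (σ.q (k + Fin.ofNat (σ.len + 2) (σ.len + 1))) =
          y (0, (σ.p (k + Fin.ofNat (σ.len + 2) (σ.len + 1))).2) := by
        have h0 : (σ.q (k + Fin.ofNat (σ.len + 2) (σ.len + 1))).1 = 0 := by rw [hrow, hs1, hk0]
        rw [hcol, ← h0]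
      have hz : k + Fin.ofNat (σ.len + 2) 0 = k := by simp
      rw [prod_rotate _ _ k, prod_rotate _ (fun k => y (σ.q k)) k,
        Finset.prod_range_succ', Finset.prod_range_succ _ (σ.len + 1), hqk, hz, hpk]
      simp only [hz] at tel
      rw [mul_comm (∏ i ∈ _, _), ← tel, mul_comm (∏ i ∈ _, _)]
end
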